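/- Let φ be the elementary Nielsen automorphism of F(a,b) = F₂ given by a ↦ ab, b ↦ b, and define for each x ∈ {a, a⁻¹, b, b⁻¹} the number n(x) = cardinality of the reduced set U(x) from the fundamental formulas: n(a) = 1, n(a⁻¹) = 1, n(b) = 2, n(b⁻¹) = 2. Then for every reduced word w of length ≥ 1 ending in the letter x, the image φ(C¹_w) is a disjoint union of exactly n(x) cylinders. -/

import Mathlib

open FreeGroup

variable {α : Type*}

/-- Inverse of a letter `(x, b)` in the alphabet `A ∪ A⁻¹`. -/
def linv (x : α × Bool) : α × Bool := (x.1, !x.2)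

/-- The boundary `∂F(A)`: infinite reduced words over `A ∪ A⁻¹`. -/
def Bd (α : Type*) : Type _ := {ξ : ℕ → α × Bool // ∀ n, ξ (n + 1) ≠ linv (ξ n)}

/-- The cylinder `C¹_w` of all infinite reduced words with prefix `w`. -/
def Cyl (w : List (α × Bool)) : Set (Bd α) :=
  {ξ | ∀ i, (h : i < w.length) → ξ.1 i = w.get ⟨i, h⟩}

/-- The length-`m` prefix of an infinite reduced word. -/
def pre (ξ : Bd α) (m : ℕ) : List (α × Bool) := List.ofFn (fun i : Fin m => ξ.1 i)

/-- `Φ` is the boundary extension of the automorphism `φ`: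
for every `ξ ∈ ∂F(A)`, the reduced words `φ(ξ|_m)` converge to `Φ ξ`. -/
def ExtendsBd [DecidableEq α] (φ : FreeGroup α ≃* FreeGroup α) (Φ : Bd α → Bd α) : Prop :=
  ∀ ξ : Bd α, ∀ k : ℕ, ∃ n : ℕ, ∀ m, n ≤ m →
    ((φ (FreeGroup.mk (pre ξ m))).toWord).take k = List.ofFn (fun i : Fin k => (Φ ξ).1 i)

/-- `Concat g ξ η` : `η` is the reduced concatenation `g · ξ` (left translation of a
boundary point by a group element): some terminal segment of (the reduced word of) `g`
cancels against an initial segment of `ξ`, and `η` is the concatenation of the rest. -/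
def Concat [DecidableEq α] (g : FreeGroup α) (ξ η : Bd α) : Prop :=
  ∃ ℓ : ℕ, ∃ hℓ : ℓ ≤ g.toWord.length,
    (∀ i, (h : i < ℓ) → ξ.1 i = linv (g.toWord.get ⟨g.toWord.length - 1 - i, by omega⟩)) ∧
    (∀ n : ℕ, η.1 n =
      if h : n < g.toWord.length - ℓ then g.toWord.get ⟨n, by omega⟩
      else ξ.1 (n - (g.toWord.length - ℓ) + ℓ))

/-- The vertex `g` of the Cayley tree lies on the bi-infinite geodesic from `ξ` to `η`. -/
def OnGeod [DecidableEq α] (g : FreeGroup α) (ξ η : Bd α) : Prop :=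
  ∃ ξ' η' : Bd α, Concat g⁻¹ ξ ξ' ∧ Concat g⁻¹ η η' ∧ ξ'.1 0 ≠ η'.1 0

/-- The double cylinder `C²_{[v,w]}`. -/
def DblCyl [DecidableEq α] (v w : FreeGroup α) : Set (Bd α × Bd α) :=
  {p | p.1 ≠ p.2 ∧ OnGeod v p.1 p.2 ∧ OnGeod w p.1 p.2}

/-- Letter-permuting automorphism: every generator maps to a single letter. -/
def IsPermAut [DecidableEq α] (φ : FreeGroup α ≃* FreeGroup α) : Prop :=
  ∀ x : α, ((φ (FreeGroup.of x)).toWord).length = 1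

/-- Elementary Nielsen automorphism: `a ↦ ab`, all other generators fixed. -/
def IsNielsenAut (φ : FreeGroup α ≃* FreeGroup α) : Prop :=
  ∃ a b : α, a ≠ b ∧ φ (FreeGroup.of a) = FreeGroup.of a * FreeGroup.of b ∧
    ∀ x : α, x ≠ a → φ (FreeGroup.of x) = FreeGroup.of x

/-!
A reduced word `w · x` is a prefix of `g` exactly when `w⁻¹ g` begins with `x`. A fundamental
formula for `φ(C¹_{w·x})` is therefore the translate by `φ(w)` of a statement about first letters:
`g` begins with `x` if and only if `s φ(g)` begins with a letter of a fixed set, where `s` is `1` or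
`b`. For a Nielsen automorphism this is clear once the first letter of `g` has been read off from
those of `φ(g)` and `b φ(g)`, by induction on the reduced word of `g`. Applied to `w⁻¹`, the same
statement shows that the words on the right of the formula are reduced.

To pass to the boundary one needs the extension `Φ` to be onto. This is bounded cancellation: both
`φ` and `φ⁻¹` are Lipschitz, so `φ` sends a path far from the identity to points far from the
identity, all of which share a long prefix.
-/

theorem linv_linv (x : α × Bool) : linv (linv x) = x := by simp [linv]

theorem ne_linv_iff {x y : α × Bool} : y ≠ linv x ↔ (x.1 = y.1 → x.2 = y.2) := by
  obtain ⟨p, s⟩ := x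
  obtain ⟨q, t⟩ := y
  cases s <;> cases t <;> simp [linv, eq_comm]

theorem inv_mk_singleton (x : α × Bool) : (mk [x])⁻¹ = mk [linv x] := rfl

section FirstLetter

variable [DecidableEq α] {g w : FreeGroup α} {x : α × Bool}

/-- The first letter of the reduced word of `g`, or `none` if `g = 1`: the direction in which the
geodesic from `1` to `g` leaves the identity in the Cayley tree. -/
def firstLetter (g : FreeGroup α) : Option (α × Bool) := g.toWord.head?

theorem firstLetter_eq_none_iff : firstLetter g = none ↔ g = 1 := by
  simp [firstLetter]

theorem firstLetter_eq_some_iff : firstLetter g = some x ↔ ∃ l, g.toWord = x :: l := by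
  simp [firstLetter, List.head?_eq_some_iff]

theorem toWord_letter_mul (h : firstLetter g ≠ some (linv x)) :
    (mk [x] * g).toWord = x :: g.toWord := by
  have hred : IsReduced (x :: g.toWord) := by
    refine List.isChain_cons.2 ⟨fun y hy => ne_linv_iff.1 ?_, isReduced_toWord⟩
    rintro rfl
    exact h hy
  rw [toWord_mul, toWord_mk, reduce_singleton, List.singleton_append, hred.reduce_eq]

theorem firstLetter_letter_mul_eq_some_iff :
    firstLetter (mk [x] * g) = some x ↔ firstLetter g ≠ some (linv x) := by
  refine ⟨fun h hg => ?_, fun h => firstLetter_eq_some_iff.2 ⟨_, toWord_letter_mul h⟩⟩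
  obtain ⟨l, hl⟩ := firstLetter_eq_some_iff.1 hg
  have hred : IsReduced (linv x :: l) := hl ▸ isReduced_toWord
  have hmul : mk [x] * g = mk l := by
    rw [← mk_toWord (x := g), hl, ← List.singleton_append (l := l), ← mul_mk,
      ← inv_mk_singleton, mul_inv_cancel_left]
  rw [hmul, firstLetter, toWord_mk, (hred.infix (List.suffix_cons _ _).isInfix).reduce_eq] at h
  exact ne_linv_iff.2 ((List.isChain_cons.1 hred).1 x h) (linv_linv x).symm

theorem letter_mul_induction {P : FreeGroup α → Prop} (one : P 1)
    (letter_mul : ∀ x g, firstLetter g ≠ some (linv x) → P g → P (mk [x] * g))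
    (g : FreeGroup α) : P g := by
  suffices ∀ l : List (α × Bool), IsReduced l → P (mk l) from
    mk_toWord (x := g) ▸ this _ isReduced_toWord
  intro l hl
  induction l with
  | nil => exact one
  | cons x l ih =>
    have hl' : IsReduced l := hl.infix (List.suffix_cons _ _).isInfix
    rw [← List.singleton_append, ← mul_mk]
    refine letter_mul x _ (fun h => ?_) (ih hl')
    rw [firstLetter, toWord_mk, hl'.reduce_eq] at h
    exact ne_linv_iff.2 ((List.isChain_cons.1 hl).1 _ h) rfl

theorem toWord_mul_letter (h : firstLetter g⁻¹ ≠ some x) :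
    (g * mk [x]).toWord = g.toWord ++ [x] := by
  have hinv : (g * mk [x])⁻¹ = mk [linv x] * g⁻¹ := by rw [mul_inv_rev, inv_mk_singleton]
  have key := toWord_letter_mul (x := linv x) (g := g⁻¹) (by rwa [linv_linv])
  rw [← hinv, toWord_inv, toWord_inv] at key
  refine invRev_injective (key.trans ?_)
  rw [invRev_append]
  rfl

theorem exists_eq_mul_letter (hw : w.toWord ≠ []) :
    ∃ v, w = v * mk [w.toWord.getLast hw] ∧ firstLetter v⁻¹ ≠ some (w.toWord.getLast hw) := by
  set x := w.toWord.getLast hw with hx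
  have hinv : firstLetter w⁻¹ = some (linv x) := by
    rw [firstLetter, toWord_inv, ← List.dropLast_append_getLast hw, ← hx, invRev_append]
    rfl
  refine ⟨w * (mk [x])⁻¹, (inv_mul_cancel_right _ _).symm, ?_⟩
  rw [mul_inv_rev, inv_inv]
  exact fun h => firstLetter_letter_mul_eq_some_iff.1 h hinv

theorem toWord_mul_letter_prefix_iff (h : firstLetter w⁻¹ ≠ some x) :
    (w * mk [x]).toWord <+: g.toWord ↔ firstLetter (w⁻¹ * g) = some x := by
  have hw := toWord_mul_letter h
  rw [firstLetter_eq_some_iff]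
  constructor
  · rintro ⟨l, hl⟩
    rw [hw, List.append_assoc, List.singleton_append] at hl
    have hred : IsReduced (x :: l) :=
      isReduced_toWord.infix (hl ▸ (List.suffix_append _ _).isInfix)
    refine ⟨l, ?_⟩
    rw [← mk_toWord (x := g), ← hl, ← mul_mk, mk_toWord, inv_mul_cancel_left, toWord_mk,
      hred.reduce_eq]
  · rintro ⟨l, hl⟩
    have hred : IsReduced (w.toWord ++ [x] ++ l) :=
      IsReduced.append_overlap (hw ▸ isReduced_toWord)
        (List.singleton_append (l := l) ▸ hl ▸ isReduced_toWord) (List.cons_ne_nil x [])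
    have hg : g = mk (w.toWord ++ [x] ++ l) := by
      rw [List.append_assoc, List.singleton_append, ← hl, ← mul_mk, mk_toWord, mk_toWord,
        mul_inv_cancel_left]
    rw [hw, hg, toWord_mk, hred.reduce_eq]
    exact List.prefix_append _ _

end FirstLetter

section BoundedCancellation

variable {β : Type*} [DecidableEq α] [DecidableEq β]

theorem toWord_mul_letter_or (g : FreeGroup α) (x : α × Bool) :
    (g * mk [x]).toWord = g.toWord ++ [x] ∨ g.toWord = (g * mk [x]).toWord ++ [linv x] := by
  by_cases h : firstLetter g⁻¹ = some x
  · right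
    rw [← toWord_mul_letter, ← inv_mk_singleton, mul_inv_cancel_right]
    rw [mul_inv_rev, inv_mk_singleton, Ne, firstLetter_letter_mul_eq_some_iff, linv_linv, not_not]
    exact h
  · exact .inl (toWord_mul_letter h)

theorem take_toWord_mul {g h : FreeGroup α} {k : ℕ} (hk : k + h.norm ≤ g.norm) :
    (g * h).toWord.take k = g.toWord.take k := by
  suffices ∀ (l : List (α × Bool)) (g : FreeGroup α), k + l.length ≤ g.norm →
      (g * mk l).toWord.take k = g.toWord.take k by
    simpa only [mk_toWord] using this h.toWord g hk
  intro l
  induction l with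
  | nil => simp [← one_eq_mk]
  | cons x l ih =>
    intro g hg
    rw [List.length_cons, FreeGroup.norm] at hg
    rw [← List.singleton_append, ← mul_mk, ← mul_assoc]
    rcases toWord_mul_letter_or g x with h | h <;>
    · have hlen := congrArg List.length h
      rw [List.length_append, List.length_singleton] at hlen
      rw [ih _ (by rw [FreeGroup.norm]; omega), h, List.take_append_of_le_length (by omega)]

theorem exists_norm_map_le [Finite α] (f : FreeGroup α →* FreeGroup β) :
    ∃ C, ∀ g, (f g).norm ≤ C * g.norm := by
  obtain ⟨C, hC⟩ := (Set.finite_range fun x : α × Bool => (f (mk [x])).norm).bddAbove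
  refine ⟨C, fun g => ?_⟩
  suffices ∀ l, (f (mk l)).norm ≤ C * l.length by
    simpa only [mk_toWord, FreeGroup.norm] using this g.toWord
  intro l
  induction l with
  | nil => simp [← one_eq_mk]
  | cons x l ih =>
    calc (f (mk (x :: l))).norm = (f (mk [x]) * f (mk l)).norm := by
          rw [← _root_.map_mul, mul_mk, List.singleton_append]
      _ ≤ (f (mk [x])).norm + (f (mk l)).norm := norm_mul_le _ _
      _ ≤ C + C * l.length := add_le_add (hC ⟨x, rfl⟩) ih
      _ = C * (x :: l).length := by rw [List.length_cons]; ring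

theorem exists_le_norm_map [Finite β] (φ : FreeGroup α ≃* FreeGroup β) (k : ℕ) :
    ∃ n, ∀ g : FreeGroup α, n ≤ g.norm → k ≤ (φ g).norm := by
  obtain ⟨C, hC⟩ := exists_norm_map_le φ.symm.toMonoidHom
  refine ⟨C * k + 1, fun g hg => ?_⟩
  have hle : g.norm ≤ C * (φ g).norm := by simpa using hC (φ g)
  exact le_of_lt (lt_of_mul_lt_mul_left (hg.trans hle) (Nat.zero_le C))

/-- Every vertex on the geodesic from `g` to `h` lies beyond `g`, so `φ` sends it far from the
identity; along such a path the first `k` letters cannot change. -/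
theorem exists_take_toWord_map_eq [Finite α] [Finite β] (φ : FreeGroup α ≃* FreeGroup β) (k : ℕ) :
    ∃ n, ∀ g h : FreeGroup α, g.toWord <+: h.toWord → n ≤ g.norm →
      (φ h).toWord.take k = (φ g).toWord.take k := by
  obtain ⟨C, hC⟩ := exists_norm_map_le φ.toMonoidHom
  obtain ⟨n, hn⟩ := exists_le_norm_map φ (k + C)
  refine ⟨n, fun g h ⟨t, ht⟩ hg => ?_⟩
  suffices ∀ l, IsReduced (g.toWord ++ l) →
      (φ (mk (g.toWord ++ l))).toWord.take k = (φ g).toWord.take k by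
    rw [← this t (ht ▸ isReduced_toWord), ht, mk_toWord]
  intro l hl
  induction l using List.reverseRecOn with
  | nil => rw [List.append_nil, mk_toWord]
  | append_singleton l x ih =>
    rw [← List.append_assoc] at hl ⊢
    have hl' : IsReduced (g.toWord ++ l) := hl.infix (List.prefix_append _ _).isInfix
    have hx : (φ (mk [x])).norm ≤ C := (hC (mk [x])).trans_eq (mul_one C)
    have hfar : k + C ≤ (φ (mk (g.toWord ++ l))).norm := by
      refine hn _ (hg.trans ?_)
      rw [FreeGroup.norm, FreeGroup.norm, toWord_mk, hl'.reduce_eq, List.length_append]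
      exact Nat.le_add_right _ _
    rw [← mul_mk, _root_.map_mul, take_toWord_mul ((Nat.add_le_add_left hx k).trans hfar), ih hl']

end BoundedCancellation

section Boundary

variable {ξ η : Bd α} {u v : List (α × Bool)}

theorem length_pre (ξ : Bd α) (m : ℕ) : (pre ξ m).length = m := List.length_ofFn

theorem getElem_pre {m i : ℕ} (hi : i < (pre ξ m).length) : (pre ξ m)[i] = ξ.1 i :=
  List.getElem_ofFn hi

theorem take_pre (ξ : Bd α) {n m : ℕ} (h : n ≤ m) : (pre ξ m).take n = pre ξ n :=
  List.ext_getElem (by simp [length_pre, h]) fun i _ _ => by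
    rw [List.getElem_take, getElem_pre, getElem_pre]

theorem isReduced_pre (ξ : Bd α) (m : ℕ) : IsReduced (pre ξ m) := by
  refine List.isChain_iff_getElem.2 fun i hi => ?_
  rw [getElem_pre, getElem_pre]
  exact ne_linv_iff.1 (ξ.2 i)

theorem Bd.ext_pre (h : ∀ k, pre ξ k = pre η k) : ξ = η := by
  refine Subtype.ext (funext fun i => ?_)
  have hi (ζ : Bd α) : i < (pre ζ (i + 1)).length := (length_pre ζ _).symm ▸ i.lt_succ_self
  rw [← getElem_pre (hi ξ), ← getElem_pre (hi η), List.getElem_of_eq (h (i + 1))]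

theorem mem_cyl_iff_pre_eq : ξ ∈ Cyl u ↔ pre ξ u.length = u := by
  refine ⟨fun h => List.ext_getElem (length_pre _ _) fun i _ hi => ?_, fun h i hi => ?_⟩
  · exact (getElem_pre _).trans (h i hi)
  · have hi' : i < (pre ξ u.length).length := (length_pre ξ _).symm ▸ hi
    exact (getElem_pre hi').symm.trans (List.getElem_of_eq h hi')

theorem cyl_inter_cyl_eq_empty (hlen : u.length = v.length) (hne : u ≠ v) :
    Cyl u ∩ Cyl v = ∅ := by
  refine Set.eq_empty_of_forall_notMem fun ξ ⟨hu, hv⟩ => hne ?_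
  rw [← mem_cyl_iff_pre_eq.1 hu, hlen, mem_cyl_iff_pre_eq.1 hv]

theorem eventually_prefix_pre_iff_mem_cyl (ξ : Bd α) (u : List (α × Bool)) :
    ∀ᶠ m in Filter.atTop, u <+: pre ξ m ↔ ξ ∈ Cyl u := by
  filter_upwards [Filter.eventually_ge_atTop u.length] with m hm
  rw [List.prefix_iff_eq_take, take_pre ξ hm, mem_cyl_iff_pre_eq, eq_comm]

variable [DecidableEq α]

theorem toWord_mk_pre (ξ : Bd α) (m : ℕ) : (mk (pre ξ m)).toWord = pre ξ m := by
  rw [toWord_mk, (isReduced_pre ξ m).reduce_eq]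

theorem norm_mk_pre (ξ : Bd α) (m : ℕ) : (mk (pre ξ m)).norm = m := by
  rw [FreeGroup.norm, toWord_mk_pre, length_pre]

theorem exists_bd_of_eventually_take_eq {g : ℕ → FreeGroup α}
    (h : ∀ k, ∃ l : List (α × Bool), l.length = k ∧
      ∀ᶠ m in Filter.atTop, (g m).toWord.take k = l) :
    ∃ ξ : Bd α, ∀ k, ∀ᶠ m in Filter.atTop, (g m).toWord.take k = pre ξ k := by
  choose l hlen hl using h
  have take_l {j k : ℕ} (hjk : j ≤ k) : (l k).take j = l j := by
    obtain ⟨m, hj, hk⟩ := ((hl j).and (hl k)).exists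
    rw [← hj, ← hk, List.take_take, min_eq_left hjk]
  have red_l (k : ℕ) : IsReduced (l k) := by
    obtain ⟨m, hm⟩ := (hl k).exists
    exact isReduced_toWord.infix (hm ▸ (List.take_prefix _ _).isInfix)
  let f (i : ℕ) : α × Bool := (l (i + 1))[i]'(by rw [hlen]; exact i.lt_succ_self)
  have getElem_l {i k : ℕ} (hi : i < (l k).length) : (l k)[i] = f i := by
    simp only [f, ← take_l (Nat.succ_le_of_lt (hi.trans_eq (hlen k))), List.getElem_take]
  have hf (i : ℕ) : f (i + 1) ≠ linv (f i) := by
    have hi : i + 1 < (l (i + 2)).length := by rw [hlen]; exact Nat.lt_succ_self _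
    rw [ne_linv_iff, ← getElem_l hi, ← getElem_l (i.lt_succ_self.trans hi)]
    exact List.isChain_iff_getElem.1 (red_l _) i hi
  refine ⟨⟨f, hf⟩, fun k => (hl k).mono fun m hm => hm.trans ?_⟩
  exact List.ext_getElem ((hlen k).trans (length_pre _ k).symm) fun i hi hi' =>
    (getElem_l hi).trans (getElem_pre hi').symm

end Boundary

section Extension

variable [DecidableEq α] {φ : FreeGroup α ≃* FreeGroup α} {Φ : Bd α → Bd α}

theorem ExtendsBd.eventually_take_eq (hΦ : ExtendsBd φ Φ) (ξ : Bd α) (k : ℕ) :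
    ∀ᶠ m in Filter.atTop, (φ (mk (pre ξ m))).toWord.take k = pre (Φ ξ) k :=
  Filter.eventually_atTop.2 (hΦ ξ k)

theorem ExtendsBd.eventually_prefix_iff_mem_cyl (hΦ : ExtendsBd φ Φ) (ξ : Bd α)
    (u : List (α × Bool)) :
    ∀ᶠ m in Filter.atTop, u <+: (φ (mk (pre ξ m))).toWord ↔ Φ ξ ∈ Cyl u := by
  filter_upwards [hΦ.eventually_take_eq ξ u.length] with m hm
  rw [List.prefix_iff_eq_take, hm, mem_cyl_iff_pre_eq, eq_comm]

theorem exists_bd_eventually_take_map_pre [Finite α] (φ : FreeGroup α ≃* FreeGroup α)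
    (η : Bd α) :
    ∃ ξ : Bd α, ∀ k, ∀ᶠ m in Filter.atTop, (φ (mk (pre η m))).toWord.take k = pre ξ k := by
  refine exists_bd_of_eventually_take_eq fun k => ?_
  obtain ⟨n₁, hn₁⟩ := exists_take_toWord_map_eq φ k
  obtain ⟨n₂, hn₂⟩ := exists_le_norm_map φ k
  have hlen : k ≤ (φ (mk (pre η (max n₁ n₂)))).norm :=
    hn₂ _ (by rw [norm_mk_pre]; exact le_max_right _ _)
  refine ⟨_, List.length_take_of_le hlen, ?_⟩
  filter_upwards [Filter.eventually_ge_atTop (max n₁ n₂)] with m hm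
  refine hn₁ _ _ ?_ (by rw [norm_mk_pre]; exact le_max_left _ _)
  rw [toWord_mk_pre, toWord_mk_pre, ← take_pre η hm]
  exact List.take_prefix _ _

theorem ExtendsBd.surjective [Finite α] (hΦ : ExtendsBd φ Φ) : Function.Surjective Φ := by
  intro η
  obtain ⟨ξ, hξ⟩ := exists_bd_eventually_take_map_pre φ.symm η
  refine ⟨ξ, Bd.ext_pre fun k => ?_⟩
  obtain ⟨n, hn⟩ := exists_take_toWord_map_eq φ k
  obtain ⟨m, hm, hnm⟩ := ((hΦ.eventually_take_eq ξ k).and (Filter.eventually_ge_atTop n)).exists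
  obtain ⟨M, hM, hkM⟩ := ((hξ m).and (Filter.eventually_ge_atTop k)).exists
  have hprefix : (mk (pre ξ m)).toWord <+: (φ.symm (mk (pre η M))).toWord := by
    rw [toWord_mk_pre, ← hM]
    exact List.take_prefix _ _
  have hcancel := hn _ _ hprefix (by rwa [norm_mk_pre])
  rw [MulEquiv.apply_symm_apply, toWord_mk_pre, take_pre η hkM] at hcancel
  rw [← hm, hcancel]

theorem ExtendsBd.image_cyl [Finite α] (hΦ : ExtendsBd φ Φ) {w : List (α × Bool)}
    {U : Finset (FreeGroup α)} {n : ℕ}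
    (hU : ∀ g : FreeGroup α, n ≤ g.norm →
      (w <+: g.toWord ↔ ∃ u ∈ U, u.toWord <+: (φ g).toWord)) :
    Φ '' Cyl w = ⋃ u ∈ U, Cyl u.toWord := by
  suffices Cyl w = Φ ⁻¹' ⋃ u ∈ U, Cyl u.toWord by
    rw [this, Set.image_preimage_eq _ hΦ.surjective]
  ext ξ
  have hΦU := (Filter.eventually_all_finset U).2 fun u _ =>
    hΦ.eventually_prefix_iff_mem_cyl ξ u.toWord
  obtain ⟨m, hw, hu, hm⟩ := ((eventually_prefix_pre_iff_mem_cyl ξ w).and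
    (hΦU.and (Filter.eventually_ge_atTop n))).exists
  have key := hU (mk (pre ξ m)) (by rwa [norm_mk_pre])
  rw [toWord_mk_pre, hw] at key
  simp only [key, Set.mem_preimage, Set.mem_iUnion, exists_prop]
  exact exists_congr fun u => and_congr_right (hu u)

/-- The fundamental formula `φ(C¹_{w·x}) = ⋃_{y ∈ Y} C¹_{φ(w)s⁻¹·y}` read at `w = 1` in the group
instead of its boundary; the exception `g = x` accounts for the case where `s φ(x) = 1`. -/
def FundamentalFormula (φ : FreeGroup α ≃* FreeGroup α) (x : α × Bool) (s : FreeGroup α)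
    (Y : Finset (α × Bool)) : Prop :=
  ∀ g, g ≠ mk [x] → (firstLetter g = some x ↔ ∃ y ∈ Y, firstLetter (s * φ g) = some y)

namespace FundamentalFormula

variable {x y : α × Bool} {s w : FreeGroup α} {Y : Finset (α × Bool)}

/-- The word `v · y` is reduced exactly when `v⁻¹` does not begin with `y`, so the formula at `w⁻¹`
itself shows that nothing cancels. -/
theorem firstLetter_inv_ne (h : FundamentalFormula φ x s Y) (hw : firstLetter w⁻¹ ≠ some x)
    (hy : y ∈ Y) : firstLetter (φ w * s⁻¹)⁻¹ ≠ some y := by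
  have hwx : w⁻¹ ≠ mk [x] := fun e => hw (by rw [e]; rfl)
  rw [mul_inv_rev, inv_inv, ← _root_.map_inv]
  exact fun he => hw ((h _ hwx).2 ⟨y, hy, he⟩)

theorem image_cyl [Finite α] (h : FundamentalFormula φ x s Y) (hΦ : ExtendsBd φ Φ)
    (hw : firstLetter w⁻¹ ≠ some x) :
    Φ '' Cyl (w * mk [x]).toWord =
      ⋃ u ∈ Y.image (fun y => φ w * s⁻¹ * mk [y]), Cyl u.toWord := by
  refine hΦ.image_cyl (n := (w * mk [x]).norm + 1) fun g hg => ?_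
  have hne : w⁻¹ * g ≠ mk [x] := by
    rw [Ne, inv_mul_eq_iff_eq_mul]
    rintro rfl
    omega
  rw [toWord_mul_letter_prefix_iff hw, h _ hne, Finset.exists_mem_image]
  refine exists_congr fun y => and_congr_right fun hy => ?_
  rw [toWord_mul_letter_prefix_iff (h.firstLetter_inv_ne hw hy), mul_inv_rev, inv_inv,
    ← _root_.map_inv, mul_assoc, ← _root_.map_mul]

theorem exists_image_cyl_eq_biUnion [Finite α] (h : FundamentalFormula φ x s Y)
    (hΦ : ExtendsBd φ Φ) (hw : firstLetter w⁻¹ ≠ some x) :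
    ∃ U : Finset (FreeGroup α), U.card = Y.card ∧
      Φ '' Cyl (w * mk [x]).toWord = (⋃ u ∈ U, Cyl u.toWord) ∧
      ∀ u₁ ∈ U, ∀ u₂ ∈ U, u₁ ≠ u₂ → Cyl u₁.toWord ∩ Cyl u₂.toWord = ∅ := by
  refine ⟨_, Finset.card_image_of_injective _ ?_, h.image_cyl hΦ hw, ?_⟩
  · exact (mul_right_injective _).comp fun y z hyz => List.singleton_inj.1 (congrArg toWord hyz)
  · simp only [Finset.forall_mem_image]
    intro y hy z hz hne
    refine cyl_inter_cyl_eq_empty ?_ (toWord_injective.ne hne)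
    rw [toWord_mul_letter (h.firstLetter_inv_ne hw hy),
      toWord_mul_letter (h.firstLetter_inv_ne hw hz), List.length_append, List.length_append]
    rfl

end FundamentalFormula

end Extension

section Nielsen

/-- `φ` is the elementary Nielsen automorphism `a ↦ ab` fixing every generator other than `a`;
unlike `IsNielsenAut`, this names the two generators. -/
structure IsNielsenMap (φ : FreeGroup α ≃* FreeGroup α) (a b : α) : Prop where intro ::
  ne : a ≠ b
  map_of_left : φ (of a) = of a * of b
  map_of_of_ne : ∀ x, x ≠ a → φ (of x) = of x

namespace IsNielsenMap

variable {φ : FreeGroup α ≃* FreeGroup α} {a b : α}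

theorem map_letter_of_ne (hφ : IsNielsenMap φ a b) {x : α × Bool} (hx : x.1 ≠ a) :
    φ (mk [x]) = mk [x] := by
  obtain ⟨c, _ | _⟩ := x
  · exact (_root_.map_inv φ (of c)).trans (congrArg (·⁻¹) (hφ.map_of_of_ne c hx))
  · exact hφ.map_of_of_ne c hx

theorem map_inv_left (hφ : IsNielsenMap φ a b) :
    φ (mk [(a, false)]) = (of b)⁻¹ * mk [(a, false)] :=
  (_root_.map_inv φ (of a)).trans (by rw [hφ.map_of_left, mul_inv_rev]; rfl)

variable [DecidableEq α]

theorem firstLetter_of_mul_eq_iff {g : FreeGroup α} :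
    firstLetter (of b * g) = some (b, true) ↔ firstLetter g ≠ some (b, false) :=
  firstLetter_letter_mul_eq_some_iff

/-- The first letters of `φ g` and `b φ g` determine that of `g`, because the letter `b` that `φ`
creates after each `a` and the `b⁻¹` it creates before each `a⁻¹` are the only source of
cancellation. -/
theorem firstLetter_eq (hφ : IsNielsenMap φ a b) (g : FreeGroup α) :
    firstLetter g =
      if firstLetter (φ g) = some (b, false) then
        if firstLetter (of b * φ g) = some (a, false) then some (a, false) else some (b, false)
      else if firstLetter (φ g) = some (a, false) then some (b, true)
      else firstLetter (φ g) := by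
  induction g using letter_mul_induction with
  | one => simp [firstLetter]
  | letter_mul x g hx ih =>
    have hab := hφ.ne
    have hb := firstLetter_of_mul_eq_iff (b := b) (g := φ g)
    rw [firstLetter_letter_mul_eq_some_iff.2 hx, _root_.map_mul]
    obtain ⟨c, s⟩ := x
    by_cases hca : c = a
    · subst hca
      cases s
      · have hinner : firstLetter (mk [(c, false)] * φ g) = some (c, false) :=
          firstLetter_letter_mul_eq_some_iff.2 (by grind [linv])
        have houter : firstLetter ((of b)⁻¹ * (mk [(c, false)] * φ g)) = some (b, false) :=
          firstLetter_letter_mul_eq_some_iff.2 (by grind [linv])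
        rw [hφ.map_inv_left, mul_assoc, mul_inv_cancel_left, houter, hinner, if_pos rfl, if_pos rfl]
      · have hmap : φ (mk [(c, true)]) = mk [(c, true)] * of b := hφ.map_of_left
        have hfirst : firstLetter (mk [(c, true)] * (of b * φ g)) = some (c, true) :=
          firstLetter_letter_mul_eq_some_iff.2 (by grind [linv])
        rw [hmap, mul_assoc, hfirst]
        simp
    · rw [hφ.map_letter_of_ne hca]
      by_cases hxb : (c, s) = (b, true)
      · have hmk : mk [(c, s)] = of b := congrArg (mk [·]) hxb
        rw [hmk]
        grind [linv]
      · have hfirst : firstLetter (mk [(c, s)] * φ g) = some (c, s) :=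
          firstLetter_letter_mul_eq_some_iff.2 (by grind [linv])
        rw [hfirst]
        by_cases hxb' : (c, s) = (b, false)
        · have hcancel : of b * (mk [(c, s)] * φ g) = φ g := by
            rw [hxb']
            exact mul_inv_cancel_left _ _
          rw [hcancel]
          grind [linv]
        · grind

theorem fundamentalFormula_of_ne (hφ : IsNielsenMap φ a b) {x : α × Bool} (hb : x.1 ≠ b)
    (ha : x ≠ (a, false)) : FundamentalFormula φ x 1 {x} := by
  intro g _
  rw [hφ.firstLetter_eq g]
  simp only [one_mul, Finset.mem_singleton, exists_eq_left]
  grind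

theorem fundamentalFormula_inv_left (hφ : IsNielsenMap φ a b) :
    FundamentalFormula φ (a, false) (of b) {(a, false)} := by
  intro g _
  rw [hφ.firstLetter_eq g]
  simp only [Finset.mem_singleton, exists_eq_left]
  have := firstLetter_of_mul_eq_iff (b := b) (g := φ g)
  grind [hφ.ne]

theorem fundamentalFormula_right (hφ : IsNielsenMap φ a b) :
    FundamentalFormula φ (b, true) 1 {(b, true), (a, false)} := by
  intro g _
  rw [hφ.firstLetter_eq g]
  simp only [one_mul, Finset.mem_insert, Finset.mem_singleton, exists_eq_or_imp, exists_eq_left]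
  grind [hφ.ne]

theorem fundamentalFormula_inv_right [Fintype α] (hφ : IsNielsenMap φ a b) :
    FundamentalFormula φ (b, false) (of b) {(b, true), (a, false)}ᶜ := by
  intro g hg
  have hne : firstLetter (of b * φ g) ≠ none := by
    rw [Ne, firstLetter_eq_none_iff, mul_eq_one_iff_inv_eq]
    intro h
    exact hg (φ.injective (h.symm.trans (hφ.map_letter_of_ne hφ.ne.symm).symm))
  have := firstLetter_of_mul_eq_iff (b := b) (g := φ g)
  obtain ⟨y, hy⟩ := Option.ne_none_iff_exists'.1 hne
  rw [hφ.firstLetter_eq g]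
  simp only [hy, Finset.mem_compl, Finset.mem_insert, Finset.mem_singleton]
  grind [hφ.ne]

theorem exists_fundamentalFormula [Fintype α] (hφ : IsNielsenMap φ a b) (x : α × Bool) :
    ∃ s Y, FundamentalFormula φ x s Y ∧
      Y.card = if x = (b, true) then 2 else
        if x = (b, false) then 2 * Fintype.card α - 2 else 1 := by
  by_cases hx : x = (b, true)
  · subst hx
    exact ⟨_, _, hφ.fundamentalFormula_right, by simp⟩
  by_cases hx' : x = (b, false)
  · subst hx'
    have hcard : ({(b, true), (a, false)} : Finset (α × Bool)).card = 2 :=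
      Finset.card_pair (by simp)
    refine ⟨_, _, hφ.fundamentalFormula_inv_right, ?_⟩
    rw [Finset.card_compl, hcard, Fintype.card_prod, Fintype.card_bool, mul_comm]
    simp
  have hb : x.1 ≠ b := by
    obtain ⟨c, _ | _⟩ := x <;> simp_all
  rw [if_neg hx, if_neg hx']
  by_cases ha : x = (a, false)
  · exact ⟨_, _, ha ▸ hφ.fundamentalFormula_inv_left, Finset.card_singleton _⟩
  · exact ⟨_, _, hφ.fundamentalFormula_of_ne hb ha, Finset.card_singleton _⟩

end IsNielsenMap

end Nielsen

theorem stmt17_general [Fintype α] [DecidableEq α] {φ : FreeGroup α ≃* FreeGroup α} {a b : α}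
    (hφ : IsNielsenMap φ a b) {Φ : Bd α → Bd α} (hΦ : ExtendsBd φ Φ)
    (w : FreeGroup α) (hw : w.toWord ≠ []) :
    ∃ U : Finset (FreeGroup α),
      U.card = (if w.toWord.getLast hw = (b, true) then 2 else
        if w.toWord.getLast hw = (b, false) then 2 * Fintype.card α - 2 else 1) ∧
      Φ '' Cyl w.toWord = (⋃ u ∈ U, Cyl u.toWord) ∧
      ∀ u₁ ∈ U, ∀ u₂ ∈ U, u₁ ≠ u₂ → Cyl u₁.toWord ∩ Cyl u₂.toWord = ∅ := by
  obtain ⟨v, hv, hvx⟩ := exists_eq_mul_letter hw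
  obtain ⟨s, Y, hY, hcard⟩ := hφ.exists_fundamentalFormula (w.toWord.getLast hw)
  rw [← hcard]
  have := hY.exists_image_cyl_eq_biUnion hΦ hvx
  rwa [← hv] at this

/-- For the Nielsen automorphism of `F₂` and a reduced word `w` ending in letter `x`,
`φ(C¹_w)` is a disjoint union of exactly `n(x)` cylinders, where
`n(a) = n(a⁻¹) = 1` and `n(b) = n(b⁻¹) = 2`. -/
theorem stmt17 (φ : FreeGroup Bool ≃* FreeGroup Bool)
    (hφa : φ (FreeGroup.of true) = FreeGroup.of true * FreeGroup.of false)
    (hφb : φ (FreeGroup.of false) = FreeGroup.of false)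
    (Φ : Bd Bool → Bd Bool) (hΦ : ExtendsBd φ Φ)
    (w : FreeGroup Bool) (hw : w.toWord ≠ []) :
    ∃ U : Finset (FreeGroup Bool),
      U.card = (if (w.toWord.getLast hw).1 then 1 else 2) ∧
      Φ '' Cyl w.toWord = (⋃ u ∈ U, Cyl u.toWord) ∧
      ∀ u₁ ∈ U, ∀ u₂ ∈ U, u₁ ≠ u₂ → Cyl u₁.toWord ∩ Cyl u₂.toWord = ∅ := by
  have hφ : IsNielsenMap φ true false :=
    ⟨by decide, hφa, fun x hx => Bool.eq_false_of_not_eq_true hx ▸ hφb⟩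
  convert stmt17_general hφ hΦ w hw using 4
  rcases w.toWord.getLast hw with ⟨_ | _, _ | _⟩ <;> rfl
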